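/- arXiv:2403.07136 — 2 statements merged into one kernel-verified Lean document; each statement's English description precedes it below -/
import Mathlib

section
/- Let X, X' ∈ ℝ^{d×n} be real matrices, R ∈ ℝⁿ a vector, and γ ∈ ℝ. Define the least-squares estimates Âᵀ = (XXᵀ)⁻¹X(X')ᵀ and θ̂ = (XXᵀ)⁻¹XR. If XXᵀ, X(X − γX')ᵀ and I_d − γÂᵀ are all invertible, then the LSTD estimator equals the model-based plug-in estimator: (X(X − γX')ᵀ)⁻¹ X R = (I_d − γÂᵀ)⁻¹ θ̂. -/
open Matrix

section

variable {K m n : Type*} [CommRing K] [Fintype m] [DecidableEq m]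

theorem mul_one_sub_smul_inv_mul {G : Matrix m m K} (hG : IsUnit G) (C : Matrix m m K) (γ : K) :
    G * (1 - γ • (G⁻¹ * C)) = G - γ • C := by
  have hdet : IsUnit G.det := (isUnit_iff_isUnit_det G).mp hG
  rw [Matrix.mul_sub, Matrix.mul_one, Matrix.mul_smul, mul_nonsing_inv_cancel_left G C hdet]

theorem mulVec_inv_mulVec {M : Matrix m m K} (hM : IsUnit M) (b : m → K) :
    M *ᵥ (M⁻¹ *ᵥ b) = b := by
  rw [mulVec_mulVec, mul_nonsing_inv M ((isUnit_iff_isUnit_det M).mp hM), one_mulVec]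

theorem inv_sub_smul_mulVec {G C : Matrix m m K} {γ : K} (hG : IsUnit G)
    (hGC : IsUnit (1 - γ • (G⁻¹ * C))) (b : m → K) :
    (G - γ • C)⁻¹ *ᵥ b = (1 - γ • (G⁻¹ * C))⁻¹ *ᵥ (G⁻¹ *ᵥ b) := by
  have hfactor : G * (1 - γ • (G⁻¹ * C)) = G - γ • C := mul_one_sub_smul_inv_mul hG C γ
  have hsolution : b = (G - γ • C) *ᵥ ((1 - γ • (G⁻¹ * C))⁻¹ *ᵥ (G⁻¹ *ᵥ b)) := by
    rw [← hfactor, ← mulVec_mulVec, mulVec_inv_mulVec hGC, mulVec_inv_mulVec hG]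
  have hunit : IsUnit (G - γ • C) := hfactor ▸ hG.mul hGC
  let := hunit.invertible
  exact inv_mulVec_eq_vec hsolution

/-- The case `Z = X` is ordinary LSTD; taking the columns of `Z` to be eligibility traces gives
LSTD(λ). -/
theorem lstd_eq_modelBased_general [Fintype n] (Z X X' : Matrix m n K) (R : n → K) (γ : K)
    (AhatT : Matrix m m K) (θhat : m → K)
    (hAhatT : AhatT = (Z * Xᵀ)⁻¹ * (Z * X'ᵀ))
    (hθhat : θhat = (Z * Xᵀ)⁻¹ *ᵥ (Z *ᵥ R))
    (hZX : IsUnit (Z * Xᵀ))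
    (hAhatT_unit : IsUnit (1 - γ • AhatT)) :
    (Z * (X - γ • X')ᵀ)⁻¹ *ᵥ (Z *ᵥ R) = (1 - γ • AhatT)⁻¹ *ᵥ θhat := by
  subst hAhatT hθhat
  rw [transpose_sub, transpose_smul, Matrix.mul_sub, Matrix.mul_smul]
  exact inv_sub_smul_mulVec hZX hAhatT_unit (Z *ᵥ R)

end

/-- Theorem 2: LSTD = model-based, linear rewards.
With `Âᵀ = (XXᵀ)⁻¹X(X')ᵀ` and `θ̂ = (XXᵀ)⁻¹XR` the least-squares estimates, if `XXᵀ`,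
`X(X - γX')ᵀ` and `I_d - γÂᵀ` are invertible, the LSTD estimator equals the model-based
plug-in estimator: `(X(X - γX')ᵀ)⁻¹ X R = (I_d - γÂᵀ)⁻¹ θ̂`. -/
theorem lstd_eq_modelBased
    {d n : ℕ}
    (X X' : Matrix (Fin d) (Fin n) ℝ) (R : Fin n → ℝ) (γ : ℝ)
    (AhatT : Matrix (Fin d) (Fin d) ℝ) (θhat : Fin d → ℝ)
    (hAhatT : AhatT = (X * Xᵀ)⁻¹ * (X * X'ᵀ))
    (hθhat : θhat = ((X * Xᵀ)⁻¹).mulVec (X.mulVec R))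
    (h₁ : IsUnit (X * Xᵀ))
    (h₂ : IsUnit (X * (X - γ • X')ᵀ))
    (h₃ : IsUnit ((1 : Matrix (Fin d) (Fin d) ℝ) - γ • AhatT)) :
    ((X * (X - γ • X')ᵀ)⁻¹).mulVec (X.mulVec R) =
      (((1 : Matrix (Fin d) (Fin d) ℝ) - γ • AhatT)⁻¹).mulVec θhat :=
  lstd_eq_modelBased_general X X X' R γ AhatT θhat hAhatT hθhat h₁ h₃
end

section
/- Let γ ∈ (0,1), let A be a d×d real matrix with γ·‖A‖² < 1 in the L∞ operator norm, let Q be a d×d real matrix, and let x ∈ ℝᵈ. Define m : ℕ → ℝ^{d×d} by m₀ = xxᵀ and m_{t+1} = A m_t Aᵀ + I_d. Let P be the unique solution of the discrete Lyapunov equation γ AᵀPA − P + Q = 0. Then the series ∑_{t=0}^∞ γᵗ · tr(Q m_t) converges and equals xᵀPx + (γ/(1−γ)) tr(P). -/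
open Matrix

attribute [local instance] Matrix.linftyOpNormedRing

/-!
The Lyapunov equation is dual to the moment recursion: cyclicity of the trace gives
`tr(Q mₜ) = tr(P mₜ) - γ tr(P (A mₜ Aᵀ)) = tr(P mₜ) - γ tr(P mₜ₊₁) + γ tr(P)`,
so the discounted rewards are a telescoping series plus a geometric one. Convergence comes from
measuring `mₜ` by its largest entry: in that norm `M ↦ A M Aᵀ` is bounded by `‖A‖²`, with `‖A‖` the
`L∞` operator norm, although `‖Aᵀ‖` itself may exceed `‖A‖`.
-/

theorem summable_of_succ_le_mul_add {a b : ℕ → ℝ} {ρ : ℝ} (ha : ∀ t, 0 ≤ a t) (hρ : ρ < 1)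
    (hb : Summable b) (hab : ∀ t, a (t + 1) ≤ ρ * a t + b t) : Summable a := by
  obtain ⟨β, hβ⟩ := hb.hasSum.tendsto_sum_nat.bddAbove_range
  refine summable_of_sum_range_le (c := (β + a 0) / (1 - ρ)) ha fun n => ?_
  have hsum : ∑ t ∈ Finset.range n, a t ≤ ρ * ∑ t ∈ Finset.range n, a t + β + a 0 :=
    calc ∑ t ∈ Finset.range n, a t
        ≤ ∑ t ∈ Finset.range (n + 1), a t := by
          rw [Finset.sum_range_succ]
          exact le_add_of_nonneg_right (ha n)
      _ = ∑ t ∈ Finset.range n, a (t + 1) + a 0 := Finset.sum_range_succ' a n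
      _ ≤ ∑ t ∈ Finset.range n, (ρ * a t + b t) + a 0 := by gcongr with t; exact hab t
      _ = ρ * ∑ t ∈ Finset.range n, a t + ∑ t ∈ Finset.range n, b t + a 0 := by
          rw [Finset.sum_add_distrib, Finset.mul_sum]
      _ ≤ ρ * ∑ t ∈ Finset.range n, a t + β + a 0 := by gcongr; exact hβ ⟨n, rfl⟩
  rw [le_div_iff₀ (sub_pos.2 hρ)]
  linarith

theorem summable_pow_smul_of_succ_eq_add {𝕜 E : Type*} [NormedField 𝕜] [NormedAddCommGroup E]
    [NormedSpace 𝕜 E] [CompleteSpace E] {γ : 𝕜} {c : ℝ} {T : E → E} {w : E} {u : ℕ → E}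
    (hγ : ‖γ‖ < 1) (hc : ‖γ‖ * c < 1) (hT : ∀ v, ‖T v‖ ≤ c * ‖v‖)
    (hu : ∀ t, u (t + 1) = T (u t) + w) : Summable fun t => γ ^ t • u t := by
  have hnoise : Summable fun t => ‖γ‖ ^ t * (‖γ‖ * ‖w‖) :=
    (summable_geometric_of_lt_one (norm_nonneg γ) hγ).mul_right _
  refine .of_norm (summable_of_succ_le_mul_add (fun t => norm_nonneg _) hc hnoise fun t => ?_)
  calc ‖γ ^ (t + 1) • u (t + 1)‖
      = ‖γ‖ ^ (t + 1) * ‖T (u t) + w‖ := by rw [norm_smul, norm_pow, hu]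
    _ ≤ ‖γ‖ ^ (t + 1) * (c * ‖u t‖ + ‖w‖) := by
        gcongr
        exact norm_add_le_of_le (hT _) le_rfl
    _ = ‖γ‖ * c * ‖γ ^ t • u t‖ + ‖γ‖ ^ t * (‖γ‖ * ‖w‖) := by rw [norm_smul, norm_pow]; ring

theorem hasSum_sub_succ_of_summable {G : Type*} [AddCommGroup G] [TopologicalSpace G]
    [IsTopologicalAddGroup G] {f : ℕ → G} (hf : Summable f) :
    HasSum (fun t => f t - f (t + 1)) (f 0) := by
  simpa using hf.hasSum.sub ((hasSum_nat_add_iff' 1).2 hf.hasSum)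

section MatrixRecursion

attribute [local instance] Matrix.linftyOpSeminormedAddCommGroup

variable {k l m n : Type*} [Fintype k] [Fintype l] [Fintype m] [Fintype n]

section SupNorm

variable {R : Type*}

-- `of.symm M` is `M` as a plain function, so `‖of.symm M‖` is the largest norm of an entry.
theorem norm_of_symm_mul_le [NonUnitalSeminormedRing R] (A : Matrix l m R) (M : Matrix m n R) :
    ‖of.symm (A * M)‖ ≤ ‖A‖ * ‖of.symm M‖ := by
  have hbound : 0 ≤ ‖A‖ * ‖of.symm M‖ := by positivity
  refine (pi_norm_le_iff_of_nonneg hbound).2 fun i => ?_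
  refine (pi_norm_le_iff_of_nonneg hbound).2 fun j => ?_
  have hcol : ‖M.col j‖ ≤ ‖of.symm M‖ :=
    (pi_norm_le_iff_of_nonneg (norm_nonneg _)).2 fun a =>
      (norm_le_pi_norm (of.symm M a) j).trans (norm_le_pi_norm (of.symm M) a)
  calc ‖(A *ᵥ M.col j) i‖
      ≤ ‖A *ᵥ M.col j‖ := norm_le_pi_norm _ i
    _ ≤ ‖A‖ * ‖M.col j‖ := linfty_opNorm_mulVec A _
    _ ≤ ‖A‖ * ‖of.symm M‖ := by gcongr

theorem norm_of_symm_transpose [SeminormedAddCommGroup R] (M : Matrix m n R) :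
    ‖of.symm Mᵀ‖ = ‖of.symm M‖ := by
  simp only [Pi.norm_def, Pi.nnnorm_def, of_symm_apply, transpose_apply]
  rw [Finset.sup_comm]

theorem norm_of_symm_mul_mul_transpose_le [NonUnitalSeminormedCommRing R] (A : Matrix k m R)
    (M : Matrix m n R) (B : Matrix l n R) :
    ‖of.symm (A * M * Bᵀ)‖ ≤ ‖A‖ * ‖B‖ * ‖of.symm M‖ :=
  calc ‖of.symm (A * M * Bᵀ)‖
      = ‖of.symm (B * (A * M)ᵀ)‖ := by
        rw [← norm_of_symm_transpose, transpose_mul, transpose_transpose]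
    _ ≤ ‖B‖ * ‖of.symm (A * M)ᵀ‖ := norm_of_symm_mul_le _ _
    _ ≤ ‖B‖ * (‖A‖ * ‖of.symm M‖) := by
        rw [norm_of_symm_transpose]
        gcongr
        exact norm_of_symm_mul_le _ _
    _ = ‖A‖ * ‖B‖ * ‖of.symm M‖ := by ring

end SupNorm

theorem trace_mul_of_lyapunov {R : Type*} [CommRing R] {γ : R} {A : Matrix m m R}
    {B : Matrix n n R} {P Q : Matrix n m R} (hP : γ • (Bᵀ * P * A) - P + Q = 0)
    (M : Matrix m n R) :
    (Q * M).trace = (P * M).trace - γ * (P * (A * M * Bᵀ)).trace := by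
  have hQ : Q = P - γ • (Bᵀ * P * A) := by
    rw [← sub_eq_zero, ← hP]
    abel
  have hcycle : (Bᵀ * P * A * M).trace = (P * (A * M * Bᵀ)).trace := by
    rw [Matrix.mul_assoc, Matrix.mul_assoc, trace_mul_comm, Matrix.mul_assoc]
  rw [hQ, Matrix.sub_mul, smul_mul, trace_sub, trace_smul, smul_eq_mul, hcycle]

theorem summable_mul_trace_mul {ι R : Type*} [CommSemiring R] [TopologicalSpace R]
    [IsTopologicalSemiring R] {c : ι → R} {M : ι → Matrix m n R} (P : Matrix n m R)
    (hM : Summable fun t => c t • M t) : Summable fun t => c t * (P * M t).trace := by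
  have hcont : Continuous fun N : Matrix m n R => (P * N).trace := by fun_prop
  simpa [Function.comp_def] using
    hM.map (traceLinearMap n R R ∘ₗ mulLeftLinearMap n R P) hcont

variable {𝕜 : Type*} [NormedField 𝕜] [CompleteSpace 𝕜] {γ : 𝕜} {A : Matrix m m 𝕜}
  {B : Matrix n n 𝕜} {W : Matrix m n 𝕜} {M : ℕ → Matrix m n 𝕜}

theorem summable_pow_smul_of_succ_eq_mul_mul_transpose_add (hγ : ‖γ‖ < 1)
    (hAB : ‖γ‖ * (‖A‖ * ‖B‖) < 1) (hM : ∀ t, M (t + 1) = A * M t * Bᵀ + W) :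
    Summable fun t => γ ^ t • M t :=
  summable_pow_smul_of_succ_eq_add (E := m → n → 𝕜) (T := fun N => of.symm (A * of N * Bᵀ))
    hγ hAB (fun N => norm_of_symm_mul_mul_transpose_le A (of N) B) hM

theorem lqr_value_function_general {P Q : Matrix n m 𝕜} (hγ : ‖γ‖ < 1)
    (hAB : ‖γ‖ * (‖A‖ * ‖B‖) < 1) (hM : ∀ t, M (t + 1) = A * M t * Bᵀ + W)
    (hP : γ • (Bᵀ * P * A) - P + Q = 0) :
    HasSum (fun t => γ ^ t * (Q * M t).trace)
      ((P * M 0).trace + γ / (1 - γ) * (P * W).trace) := by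
  have hreward (t : ℕ) : γ ^ t * (Q * M t).trace =
      (γ ^ t * (P * M t).trace - γ ^ (t + 1) * (P * M (t + 1)).trace) +
        γ ^ t * (γ * (P * W).trace) := by
    rw [trace_mul_of_lyapunov hP, hM, Matrix.mul_add, trace_add]
    ring
  have htelescope := hasSum_sub_succ_of_summable <| summable_mul_trace_mul P <|
    summable_pow_smul_of_succ_eq_mul_mul_transpose_add hγ hAB hM
  have hgeometric := (hasSum_geometric_of_norm_lt_one hγ).mul_right (γ * (P * W).trace)
  have hvalue : (P * M 0).trace + γ / (1 - γ) * (P * W).trace =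
      γ ^ 0 * (P * M 0).trace + (1 - γ)⁻¹ * (γ * (P * W).trace) := by
    rw [div_eq_mul_inv]
    ring
  rw [funext hreward, hvalue]
  exact htelescope.add hgeometric

end MatrixRecursion

/-- the LQR value function.
Let `m₀ = xxᵀ` and `m_{t+1} = A mₜ Aᵀ + I_d` be the second moments of the linear system
started at `x` with identity noise covariance, and let `P` solve the discrete Lyapunov
equation `γ AᵀPA - P + Q = 0`.  If `γ ∈ (0,1)` and `γ‖A‖² < 1` in the `L∞` operator norm,
the discounted sum of expected quadratic rewards `∑ₜ γᵗ tr(Q mₜ)` converges and equals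
`xᵀPx + (γ/(1-γ)) tr(P)`. -/
theorem lqr_value_function
    {d : ℕ} (γ : ℝ) (hγ : γ ∈ Set.Ioo (0 : ℝ) 1)
    (A Q : Matrix (Fin d) (Fin d) ℝ)
    (hA : γ * ‖A‖ ^ 2 < 1)
    (x : Fin d → ℝ)
    (m : ℕ → Matrix (Fin d) (Fin d) ℝ)
    (hm0 : m 0 = vecMulVec x x)
    (hmrec : ∀ t, m (t + 1) = A * m t * Aᵀ + 1)
    (P : Matrix (Fin d) (Fin d) ℝ)
    (hP : γ • (Aᵀ * P * A) - P + Q = 0) :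
    Summable (fun t : ℕ => γ ^ t * (Q * m t).trace) ∧
      (∑' t : ℕ, γ ^ t * (Q * m t).trace) = x ⬝ᵥ P.mulVec x + γ / (1 - γ) * P.trace := by
  have hsum := lqr_value_function_general (B := A) (by simpa [abs_of_pos hγ.1] using hγ.2)
    (by simpa [abs_of_pos hγ.1, ← sq] using hA) hmrec hP
  rw [hm0, mul_vecMulVec, trace_vecMulVec, dotProduct_comm, Matrix.mul_one] at hsum
  exact ⟨hsum.summable, hsum.tsum_eq⟩
end
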